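/- arXiv:2109.05768 — 2 statements merged into one kernel-verified Lean document; each statement's English description precedes it below -/
import Mathlib

section
/- An inner product ⟨·,·⟩ on Sym(n) is invariant under the group D±(n) of diagonal matrices with diagonal entries in {−1,+1} (i.e. ⟨εXε, εYε⟩ = ⟨X,Y⟩ for every such diagonal sign matrix ε and all X,Y ∈ Sym(n)) if and only if there exist n(n−1)/2 positive real numbers α_{ij} = α_{ji} > 0 for i ≠ j and a matrix S ∈ SPD(n) such that for all X ∈ Sym(n): ⟨X,X⟩ = Σ_{i≠j} α_{ij} X_{ij}² + Σ_{i,j} S_{ij} X_{ii} X_{jj}. -/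
open Matrix Finset

section Aux

variable {n : ℕ} (ip : Matrix (Fin n) (Fin n) ℝ → Matrix (Fin n) (Fin n) ℝ → ℝ)
    (h_symm : ∀ X Y, X.IsSymm → Y.IsSymm → ip X Y = ip Y X)
    (h_add : ∀ X Y Z, X.IsSymm → Y.IsSymm → Z.IsSymm → ip (X + Y) Z = ip X Z + ip Y Z)
    (h_smul : ∀ (c : ℝ) (X Y : Matrix (Fin n) (Fin n) ℝ), X.IsSymm → Y.IsSymm →
      ip (c • X) Y = c * ip X Y)

theorem aux_sy (X : Matrix (Fin n) (Fin n) ℝ) : (X + Xᵀ).IsSymm := by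
  unfold Matrix.IsSymm
  rw [Matrix.transpose_add, Matrix.transpose_transpose, add_comm]

theorem aux_diag (e : Fin n → ℝ) (X : Matrix (Fin n) (Fin n) ℝ) (i j : Fin n) :
    (Matrix.diagonal e * X * Matrix.diagonal e) i j = e i * X i j * e j := by
  rw [Matrix.mul_diagonal, Matrix.diagonal_mul]

theorem aux_conj_symm (e : Fin n → ℝ) (X : Matrix (Fin n) (Fin n) ℝ) (h : X.IsSymm) :
    (Matrix.diagonal e * X * Matrix.diagonal e).IsSymm := by
  ext i j
  rw [Matrix.transpose_apply, aux_diag, aux_diag, h.apply]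
  ring

theorem aux_expand
    (h_symm : ∀ X Y, X.IsSymm → Y.IsSymm → ip X Y = ip Y X)
    (h_add : ∀ X Y Z, X.IsSymm → Y.IsSymm → Z.IsSymm → ip (X + Y) Z = ip X Z + ip Y Z)
    (h_smul : ∀ (c : ℝ) (X Y : Matrix (Fin n) (Fin n) ℝ), X.IsSymm → Y.IsSymm →
      ip (c • X) Y = c * ip X Y) :
    ∃ B : Matrix (Fin n) (Fin n) ℝ →ₗ[ℝ] Matrix (Fin n) (Fin n) ℝ →ₗ[ℝ] ℝ,
      ∀ X Y, B X Y = ip (X + Xᵀ) (Y + Yᵀ) := by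
  have a1 : ∀ X Y : Matrix (Fin n) (Fin n) ℝ, (X + Y) + (X + Y)ᵀ = (X + Xᵀ) + (Y + Yᵀ) := by
    intro X Y; rw [Matrix.transpose_add]; abel
  have a2 : ∀ (c : ℝ) (X : Matrix (Fin n) (Fin n) ℝ), (c • X) + (c • X)ᵀ = c • (X + Xᵀ) := by
    intro c X; rw [Matrix.transpose_smul, smul_add]
  refine ⟨LinearMap.mk₂ ℝ (fun X Y => ip (X + Xᵀ) (Y + Yᵀ)) ?_ ?_ ?_ ?_, fun X Y => rfl⟩
  · intro X Y Z
    rw [a1, h_add _ _ _ (aux_sy X) (aux_sy Y) (aux_sy Z)]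
  · intro c X Y
    rw [a2, h_smul _ _ _ (aux_sy X) (aux_sy Y), smul_eq_mul]
  · intro X Y Z
    rw [a1, h_symm _ _ (aux_sy X) ((aux_sy Y).add (aux_sy Z)),
      h_add _ _ _ (aux_sy Y) (aux_sy Z) (aux_sy X), h_symm _ _ (aux_sy Y) (aux_sy X),
      h_symm _ _ (aux_sy Z) (aux_sy X)]
  · intro c X Y
    rw [a2, h_symm _ _ (aux_sy X) ((aux_sy Y).smul c), h_smul _ _ _ (aux_sy Y) (aux_sy X),
      h_symm _ _ (aux_sy Y) (aux_sy X), smul_eq_mul]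

theorem aux_sum (B : Matrix (Fin n) (Fin n) ℝ →ₗ[ℝ] Matrix (Fin n) (Fin n) ℝ →ₗ[ℝ] ℝ)
    (X : Matrix (Fin n) (Fin n) ℝ) :
    B X X = ∑ i, ∑ j, ∑ k, ∑ l,
      X i j * X k l * B (Matrix.single i j 1) (Matrix.single k l 1) := by
  have h1 : ∀ f : Matrix (Fin n) (Fin n) ℝ →ₗ[ℝ] ℝ,
      f X = ∑ i, ∑ j, X i j * f (Matrix.single i j 1) := by
    intro f
    conv_lhs => rw [Matrix.matrix_eq_sum_single X]
    simp only [map_sum]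
    refine Finset.sum_congr rfl fun i _ => Finset.sum_congr rfl fun j _ => ?_
    rw [← smul_eq_mul, ← map_smul, Matrix.smul_single, smul_eq_mul, mul_one]
  have h2 := h1 (B.flip X)
  simp only [LinearMap.flip_apply] at h2
  rw [h2]
  refine Finset.sum_congr rfl fun i _ => Finset.sum_congr rfl fun j _ => ?_
  rw [h1 (B (Matrix.single i j 1)), Finset.mul_sum]
  refine Finset.sum_congr rfl fun k _ => ?_
  rw [Finset.mul_sum]
  refine Finset.sum_congr rfl fun l _ => ?_
  ring

end Aux

/-- An inner product on `Sym(n)` is invariant under conjugation by diagonal sign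
matrices iff it has the form `⟨X,X⟩ = Σ_{i≠j} α_{ij} X_{ij}² + Σ_{i,j} S_{ij} X_{ii}X_{jj}`
with `α_{ij} = α_{ji} > 0` for `i ≠ j` and `S ∈ SPD(n)`. -/
theorem sign_diagonal_invariant_inner_products (n : ℕ)
    (ip : Matrix (Fin n) (Fin n) ℝ → Matrix (Fin n) (Fin n) ℝ → ℝ)
    (h_symm : ∀ X Y, X.IsSymm → Y.IsSymm → ip X Y = ip Y X)
    (h_add : ∀ X Y Z, X.IsSymm → Y.IsSymm → Z.IsSymm → ip (X + Y) Z = ip X Z + ip Y Z)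
    (h_smul : ∀ (c : ℝ) (X Y : Matrix (Fin n) (Fin n) ℝ), X.IsSymm → Y.IsSymm →
      ip (c • X) Y = c * ip X Y)
    (h_pos : ∀ X, X.IsSymm → X ≠ 0 → 0 < ip X X) :
    (∀ e : Fin n → ℝ, (∀ i, e i = 1 ∨ e i = -1) →
      ∀ X Y : Matrix (Fin n) (Fin n) ℝ, X.IsSymm → Y.IsSymm →
        ip (Matrix.diagonal e * X * Matrix.diagonal e)
           (Matrix.diagonal e * Y * Matrix.diagonal e) = ip X Y) ↔
    (∃ (a : Fin n → Fin n → ℝ) (S : Matrix (Fin n) (Fin n) ℝ),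
      (∀ i j, a i j = a j i) ∧ (∀ i j, i ≠ j → 0 < a i j) ∧ S.PosDef ∧
      ∀ X : Matrix (Fin n) (Fin n) ℝ, X.IsSymm →
        ip X X = (∑ i, ∑ j, if i = j then 0 else a i j * X i j ^ 2) +
          ∑ i, ∑ j, S i j * X i i * X j j) := by
  constructor
  · intro hinv
    obtain ⟨B, hB⟩ := aux_expand ip h_symm h_add h_smul
    have hBX : ∀ X : Matrix (Fin n) (Fin n) ℝ, X.IsSymm → B X X = 4 * ip X X := by
      intro X hX
      have h2 : X + Xᵀ = (2 : ℝ) • X := by rw [hX.eq, two_smul]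
      rw [hB, h2, h_smul _ _ _ hX (hX.smul 2), h_symm _ _ hX (hX.smul 2), h_smul _ _ _ hX hX]
      ring
    obtain ⟨b, hb⟩ : ∃ b : Fin n → Fin n → Fin n → Fin n → ℝ,
      ∀ i j k l, b i j k l = B (Matrix.single i j 1) (Matrix.single k l 1) := ⟨_, fun _ _ _ _ => rfl⟩
    have hsw1 : ∀ i j k l, b i j k l = b j i k l := by
      intro i j k l
      rw [hb, hb, hB, hB, Matrix.transpose_single, Matrix.transpose_single,
        Matrix.transpose_single, add_comm (Matrix.single j i 1)]
    have hsw : ∀ i j k l, b i j k l = b k l i j := by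
      intro i j k l
      rw [hb, hb, hB, hB, h_symm _ _ (aux_sy _) (aux_sy _)]
    have hsw2 : ∀ i j k l, b i j k l = b i j l k := by
      intro i j k l
      rw [hsw, hsw1, hsw]
    have hconj : ∀ (e : Fin n → ℝ) i j,
        Matrix.diagonal e * (Matrix.single i j 1 + (Matrix.single i j 1)ᵀ) * Matrix.diagonal e =
          (e i * e j) • (Matrix.single i j (1:ℝ) + (Matrix.single i j 1)ᵀ) := by
      intro e i j
      ext p q
      rw [aux_diag]
      simp only [Matrix.transpose_single, Matrix.add_apply, Matrix.smul_apply, Matrix.single_apply,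
        smul_eq_mul]
      by_cases h1 : i = p ∧ j = q
      · obtain ⟨rfl, rfl⟩ := h1
        ring
      · by_cases h2 : j = p ∧ i = q
        · obtain ⟨rfl, rfl⟩ := h2
          ring
        · simp [h1, h2]
    have hbe : ∀ (e : Fin n → ℝ), (∀ i, e i = 1 ∨ e i = -1) → ∀ i j k l,
        b i j k l = e i * e j * (e k * e l) * b i j k l := by
      intro e he i j k l
      have h := hinv e he _ _ (aux_sy (Matrix.single i j 1)) (aux_sy (Matrix.single k l 1))
      rw [hconj, hconj, h_smul _ _ _ (aux_sy _) ((aux_sy _).smul _),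
        h_symm _ _ (aux_sy _) ((aux_sy _).smul _), h_smul _ _ _ (aux_sy _) (aux_sy _),
        h_symm _ _ (aux_sy _) (aux_sy _), ← hB, ← hb] at h
      linarith
    have hbp : ∀ (p i j k l : Fin n), b i j k l = (if i = p then -1 else 1) *
        (if j = p then -1 else 1) * ((if k = p then -1 else 1) * (if l = p then -1 else 1))
        * b i j k l := by
      intro p i j k l
      refine hbe (fun i => if i = p then -1 else 1) ?_ i j k l
      intro i
      by_cases h : i = p <;> simp [h]
    have hb0 : ∀ i j k l, i ≠ j → ¬ (k = i ∧ l = j) → ¬ (k = j ∧ l = i) → b i j k l = 0 := by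
      intro i j k l hij h1 h2
      have e1 := hbp i i j k l
      have e2 := hbp j i j k l
      by_cases c1 : k = i <;> by_cases c2 : l = i <;> by_cases c3 : k = j <;>
        by_cases c4 : l = j <;> simp [c1, c2, c3, c4, hij, hij.symm] at e1 e2 h1 h2 ⊢ <;>
        grind
    have hbf : ∀ i j k l, b i j k l =
        (if i = j then (if k = l then b i i k k else 0) else 0) +
        ((if k = i then (if l = j then (if i = j then 0 else b i j i j) else 0) else 0) +
        (if k = j then (if l = i then (if i = j then 0 else b i j i j) else 0) else 0)) := by
      intro i j k l
      by_cases hij : i = j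
      · subst hij
        by_cases hkl : k = l
        · subst hkl; simp
        · have : b i i k l = 0 := by
            rw [hsw]
            apply hb0 k l i i hkl <;> grind
          simp [hkl, this]
      · by_cases h1 : k = i ∧ l = j
        · obtain ⟨rfl, rfl⟩ := h1
          simp [hij]
        · by_cases h2 : k = j ∧ l = i
          · obtain ⟨rfl, rfl⟩ := h2
            simp [hij, Ne.symm hij, hsw2 l k k l]
          · rw [hb0 i j k l hij h1 h2]
            grind
    have hform : ∀ X : Matrix (Fin n) (Fin n) ℝ, X.IsSymm →
        ip X X = (∑ i, ∑ j, if i = j then 0 else b i j i j / 2 * X i j ^ 2) +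
          ∑ i, ∑ j, b i i j j / 4 * X i i * X j j := by
      intro X hX
      have h := aux_sum B X
      rw [hBX X hX] at h
      have h3 : ∀ i j, ∑ k, ∑ l, X i j * X k l * B (Matrix.single i j 1) (Matrix.single k l 1) =
          (if i = j then ∑ k, X i i * X k k * b i i k k else 0) +
          (if i = j then 0 else 2 * b i j i j * X i j ^ 2) := by
        intro i j
        simp only [← hb]
        have : ∀ k l, X i j * X k l * b i j k l = 
          (if i = j then (if k = l then X i i * X k k * b i i k k else 0) else 0) +
        ((if k = i then (if l = j then (if i = j then 0 else X i j ^ 2 * b i j i j) else 0) else 0) +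
        (if k = j then (if l = i then (if i = j then 0 else X i j ^ 2 * b i j i j) else 0) else 0)) := by
          intro k l
          have := hX.apply i j
          rw [hbf]
          split_ifs <;> grind
        simp only [this, Finset.sum_add_distrib]
        by_cases hij : i = j
        · simp [hij]
        · simp [hij]
          ring
      simp only [h3, Finset.sum_add_distrib] at h
      simp only [Finset.sum_ite_eq, Finset.mem_univ, if_true] at h
      have h4 : ip X X = (1/4) * (4 * ip X X) := by ring
      rw [h4, h, mul_add, add_comm, Finset.mul_sum, Finset.mul_sum]
      congr 1
      · refine Finset.sum_congr rfl fun i _ => ?_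
        rw [Finset.mul_sum]
        refine Finset.sum_congr rfl fun j _ => ?_
        split_ifs <;> ring
      · refine Finset.sum_congr rfl fun i _ => ?_
        rw [Finset.mul_sum]
        refine Finset.sum_congr rfl fun j _ => ?_
        ring
    refine ⟨fun i j => b i j i j / 2, Matrix.of fun i j => b i i j j / 4, ?_, ?_, ?_, hform⟩
    · intro i j
      simp only
      rw [hsw1, hsw2]
    · intro i j hij
      have : 0 < b i j i j := by
        rw [hb, hB]
        apply h_pos _ (aux_sy _)
        intro h0
        have := congrFun (congrFun h0 i) j
        simp [Matrix.single_apply, hij, hij.symm] at this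
      simp only
      linarith
    · refine Matrix.PosDef.of_dotProduct_mulVec_pos ?_ ?_
      · ext i j
        simp [hsw i i j j]
      · intro x hx
        have h := h_pos (Matrix.diagonal x) (Matrix.isSymm_diagonal x) (by
          intro h0
          apply hx
          exact Matrix.diagonal_eq_zero.mp h0)
        rw [hform _ (Matrix.isSymm_diagonal x)] at h
        have h0 : (∑ i, ∑ j, if i = j then 0 else b i j i j / 2 * (Matrix.diagonal x) i j ^ 2) = 0 := by
          refine Finset.sum_eq_zero fun i _ => Finset.sum_eq_zero fun j _ => ?_
          by_cases hij : i = j <;> simp [hij]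
        rw [h0, zero_add] at h
        refine lt_of_lt_of_eq h ?_
        symm
        simp only [dotProduct, Matrix.mulVec, Finset.mul_sum, Matrix.of_apply,
          Matrix.diagonal_apply_eq]
        refine Finset.sum_congr rfl fun i _ => Finset.sum_congr rfl fun j _ => ?_
        simp
        ring
  · rintro ⟨a, S, -, -, -, hf⟩ e he X Y hX hY
    have hpol : ∀ X Y : Matrix (Fin n) (Fin n) ℝ, X.IsSymm → Y.IsSymm →
        ip (X + Y) (X + Y) = ip X X + 2 * ip X Y + ip Y Y := by
      intro X Y hX hY
      rw [h_add _ _ _ hX hY (hX.add hY), h_symm _ _ hX (hX.add hY), h_symm _ _ hY (hX.add hY),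
        h_add _ _ _ hX hY hX, h_add _ _ _ hX hY hY, h_symm _ _ hY hX]
      ring
    have he2 : ∀ i, e i * e i = 1 := by
      intro i
      rcases he i with h | h <;> rw [h] <;> norm_num
    have hq : ∀ X : Matrix (Fin n) (Fin n) ℝ, X.IsSymm →
        ip (Matrix.diagonal e * X * Matrix.diagonal e)
          (Matrix.diagonal e * X * Matrix.diagonal e) = ip X X := by
      intro X hX
      rw [hf _ hX, hf _ (aux_conj_symm e X hX)]
      simp only [aux_diag]
      have k1 : ∀ i j, (e i * X i j * e j) ^ 2 = X i j ^ 2 := by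
        intro i j
        have : (e i * X i j * e j) ^ 2 = (e i * e i) * (e j * e j) * X i j ^ 2 := by ring
        rw [this, he2, he2]; ring
      have k2 : ∀ i, e i * X i i * e i = X i i := by
        intro i
        have : e i * X i i * e i = (e i * e i) * X i i := by ring
        rw [this, he2, one_mul]
      simp only [k1, k2]
    have p1 := hpol X Y hX hY
    have p2 := hpol _ _ (aux_conj_symm e X hX) (aux_conj_symm e Y hY)
    rw [← Matrix.add_mul, ← Matrix.mul_add, hq _ (hX.add hY), hq _ hX, hq _ hY] at p2
    linarith
end

section
/- Let (g_Σ)_{Σ ∈ SPD(n)} be the O(n)-invariant family of inner products on Sym(n) determined by functions γ, α : (0,∞)ⁿ → (0,∞) and β : (0,∞)ⁿ → ℝ satisfying the compatibility, positivity and symmetry conditions, via g_D(X,X) = Σ_i γ(d_i, d_{k≠i}) X_{ii}² + Σ_{i≠j} α(d_i, d_j, d_{k≠i,j}) X_{ij}² + Σ_{i≠j} β(d_i, d_j, d_{k≠i,j}) X_{ii} X_{jj} at positive diagonal D and g_Σ(X,X) = g_D(PᵀXP, PᵀXP) for Σ = PDPᵀ. Then g is invariant under scaling — meaning g_{λΣ}(λX,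 λX) = g_Σ(X,X) for all λ > 0, Σ ∈ SPD(n), X ∈ Sym(n) — if and only if f(λx) = λ^{−2} f(x) for each f ∈ {α, β, γ}, all x ∈ (0,∞)ⁿ and all λ > 0. -/
open Matrix Finset

/-- A vector in `ℝⁿ` is positive if all its entries are. -/
def PosVec {n : ℕ} (d : Fin n → ℝ) : Prop := ∀ i, 0 < d i

/-- The vector `(d_i, d_{k≠i})`: entries of `d` reordered so that `d i` comes first, the
remaining entries being the `d k` for `k ≠ i` (in some order). -/
def reord1 {n : ℕ} (hn : 2 ≤ n) (d : Fin n → ℝ) (i : Fin n) : Fin n → ℝ :=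
  d ∘ (Equiv.swap (⟨0, by omega⟩ : Fin n) i)

/-- A permutation sending `0 ↦ i` and `1 ↦ j` (for `i ≠ j`). -/
def perm2 {n : ℕ} (hn : 2 ≤ n) (i j : Fin n) : Equiv.Perm (Fin n) :=
  Equiv.swap (⟨0, by omega⟩ : Fin n) i *
    Equiv.swap (⟨1, by omega⟩ : Fin n) (Equiv.swap (⟨0, by omega⟩ : Fin n) i j)

/-- The vector `(d_i, d_j, d_{k≠i,j})`: entries of `d` reordered so that `d i, d j` come first,
the remaining entries being the `d k` for `k ≠ i,j` (in some order). -/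
def reord2 {n : ℕ} (hn : 2 ≤ n) (d : Fin n → ℝ) (i j : Fin n) : Fin n → ℝ :=
  d ∘ (perm2 hn i j)

/-- `f` is `(1,n−1)`-symmetric: invariant under all permutations of its last `n−1` variables. -/
def Sym1n {n : ℕ} (hn : 2 ≤ n) (f : (Fin n → ℝ) → ℝ) : Prop :=
  ∀ σ : Equiv.Perm (Fin n), σ ⟨0, by omega⟩ = (⟨0, by omega⟩ : Fin n) →
    ∀ d : Fin n → ℝ, PosVec d → f (d ∘ σ) = f d

/-- `f` is `(2,n−2)`-symmetric: invariant under all permutations of its first `2` variables and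
of its last `n−2` variables. -/
def Sym2n {n : ℕ} (hn : 2 ≤ n) (f : (Fin n → ℝ) → ℝ) : Prop :=
  ∀ σ : Equiv.Perm (Fin n),
    ((σ ⟨0, by omega⟩ = (⟨0, by omega⟩ : Fin n) ∧ σ ⟨1, by omega⟩ = (⟨1, by omega⟩ : Fin n)) ∨
     (σ ⟨0, by omega⟩ = (⟨1, by omega⟩ : Fin n) ∧ σ ⟨1, by omega⟩ = (⟨0, by omega⟩ : Fin n))) →
    ∀ d : Fin n → ℝ, PosVec d → f (d ∘ σ) = f d

/-- The symmetric matrix `S(d)` with `S_{ii}(d) = γ(d_i, d_{k≠i})` and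
`S_{ij}(d) = β(d_i, d_j, d_{k≠i,j})` for `i ≠ j`. -/
def Smat {n : ℕ} (hn : 2 ≤ n) (γ β : (Fin n → ℝ) → ℝ) (d : Fin n → ℝ) :
    Matrix (Fin n) (Fin n) ℝ :=
  Matrix.of fun i j => if i = j then γ (reord1 hn d i) else β (reord2 hn d i j)

/-- The compatibility condition: `γ = α + β` on `{d : d₁ = d₂}`. -/
def CompatCond {n : ℕ} (hn : 2 ≤ n) (γ α β : (Fin n → ℝ) → ℝ) : Prop :=
  ∀ d : Fin n → ℝ, PosVec d → d ⟨0, by omega⟩ = d ⟨1, by omega⟩ → γ d = α d + β d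

/-- The positivity condition: `S(d)` is positive definite for every positive `d`. -/
def PositivityCond {n : ℕ} (hn : 2 ≤ n) (γ β : (Fin n → ℝ) → ℝ) : Prop :=
  ∀ d : Fin n → ℝ, PosVec d → (Smat hn γ β d).PosDef

/-- The bilinear form
`g_D(X,Y) = Σ_i γ(d_i,d_{k≠i}) X_{ii}Y_{ii} + Σ_{i≠j} α(d_i,d_j,d_{k≠i,j}) X_{ij}Y_{ij}
 + Σ_{i≠j} β(d_i,d_j,d_{k≠i,j}) X_{ii}Y_{jj}` at the positive diagonal matrix `D = diag d`. -/
def gD {n : ℕ} (hn : 2 ≤ n) (γ α β : (Fin n → ℝ) → ℝ) (d : Fin n → ℝ)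
    (X Y : Matrix (Fin n) (Fin n) ℝ) : ℝ :=
  (∑ i, γ (reord1 hn d i) * X i i * Y i i) +
  (∑ i, ∑ j, if i = j then 0 else α (reord2 hn d i j) * X i j * Y i j) +
  (∑ i, ∑ j, if i = j then 0 else β (reord2 hn d i j) * X i i * Y j j)

/-- Frobenius norm of a real matrix. -/
noncomputable def frobNorm {n : ℕ} (A : Matrix (Fin n) (Fin n) ℝ) : ℝ :=
  Real.sqrt (∑ i, ∑ j, (A i j) ^ 2)

lemma aux_posvec_smul {n : ℕ} {x : Fin n → ℝ} (hx : PosVec x) {l : ℝ} (hl : 0 < l) :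
    PosVec (l • x) := fun i => by simpa using mul_pos hl (hx i)

lemma aux_spectral {n : ℕ} (S : Matrix (Fin n) (Fin n) ℝ) (hS : S.PosDef) :
    ∃ (P : Matrix (Fin n) (Fin n) ℝ) (d : Fin n → ℝ), P * Pᵀ = 1 ∧ PosVec d ∧
      S = P * Matrix.diagonal d * Pᵀ := by
  refine ⟨hS.1.eigenvectorUnitary, hS.1.eigenvalues, ?_, fun i => hS.eigenvalues_pos i, ?_⟩
  · have h := (Matrix.mem_unitaryGroup_iff).1 hS.1.eigenvectorUnitary.2
    simpa [Matrix.star_eq_conjTranspose] using h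
  · have h := hS.1.spectral_theorem
    conv_lhs => rw [h]
    simp [Unitary.conjStarAlgAut_apply, Matrix.star_eq_conjTranspose]

lemma aux_smul1 {n : ℕ} (hn : 2 ≤ n) (l : ℝ) (x : Fin n → ℝ) (i : Fin n) :
    reord1 hn (l • x) i = l • reord1 hn x i := rfl

lemma aux_smul2 {n : ℕ} (hn : 2 ≤ n) (l : ℝ) (x : Fin n → ℝ) (i j : Fin n) :
    reord2 hn (l • x) i j = l • reord2 hn x i j := rfl

lemma aux_diag1 {n : ℕ} (hn : 2 ≤ n) (γ α β : (Fin n → ℝ) → ℝ) (d : Fin n → ℝ) (a : Fin n) (l : ℝ) :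
    gD hn γ α β d (l • Matrix.diagonal (Pi.single a 1)) (l • Matrix.diagonal (Pi.single a 1))
      = l ^ 2 * γ (reord1 hn d a) := by
  have h1 : ∀ i j : Fin n, (if i = j then (0:ℝ) else α (reord2 hn d i j) *
      (l • Matrix.diagonal (Pi.single a 1) : Matrix (Fin n) (Fin n) ℝ) i j *
      (l • Matrix.diagonal (Pi.single a 1) : Matrix (Fin n) (Fin n) ℝ) i j) = 0 := by
    intro i j
    split_ifs with h <;> simp [h]
  have h2 : ∀ i j : Fin n, (if i = j then (0:ℝ) else β (reord2 hn d i j) *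
      (l • Matrix.diagonal (Pi.single a 1) : Matrix (Fin n) (Fin n) ℝ) i i *
      (l • Matrix.diagonal (Pi.single a 1) : Matrix (Fin n) (Fin n) ℝ) j j) = 0 := by
    intro i j
    split_ifs with h
    · rfl
    · by_cases hi : i = a <;> by_cases hj : j = a <;> simp_all [Pi.single_apply]
  unfold gD
  simp only [h1, h2]
  simp [Pi.single_apply]
  ring

lemma aux_diag2 {n : ℕ} (hn : 2 ≤ n) (γ α β : (Fin n → ℝ) → ℝ) (d : Fin n → ℝ) (a b : Fin n)
    (hab : a ≠ b) (l : ℝ) :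
    gD hn γ α β d (l • Matrix.diagonal (Pi.single a 1 + Pi.single b 1))
      (l • Matrix.diagonal (Pi.single a 1 + Pi.single b 1))
      = l ^ 2 * (γ (reord1 hn d a) + γ (reord1 hn d b) + β (reord2 hn d a b)
        + β (reord2 hn d b a)) := by
  have h1 : ∀ i j : Fin n, (if i = j then (0:ℝ) else α (reord2 hn d i j) *
      (l • Matrix.diagonal (Pi.single a 1 + Pi.single b 1) : Matrix (Fin n) (Fin n) ℝ) i j *
      (l • Matrix.diagonal (Pi.single a 1 + Pi.single b 1) : Matrix (Fin n) (Fin n) ℝ) i j) = 0 := by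
    intro i j
    split_ifs with h <;> simp [h]
  have h0 : ∀ i : Fin n, γ (reord1 hn d i) *
      (l • Matrix.diagonal (Pi.single a 1 + Pi.single b 1) : Matrix (Fin n) (Fin n) ℝ) i i *
      (l • Matrix.diagonal (Pi.single a 1 + Pi.single b 1) : Matrix (Fin n) (Fin n) ℝ) i i =
      (if i = a then l ^ 2 * γ (reord1 hn d a) else 0) +
      (if i = b then l ^ 2 * γ (reord1 hn d b) else 0) := by
    intro i
    by_cases hi : i = a <;> by_cases hi' : i = b <;> simp_all [Pi.single_apply] <;> ring
  have h2 : ∀ i j : Fin n, (if i = j then (0:ℝ) else β (reord2 hn d i j) *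
      (l • Matrix.diagonal (Pi.single a 1 + Pi.single b 1) : Matrix (Fin n) (Fin n) ℝ) i i *
      (l • Matrix.diagonal (Pi.single a 1 + Pi.single b 1) : Matrix (Fin n) (Fin n) ℝ) j j) =
      (if i = a then (if j = b then l ^ 2 * β (reord2 hn d a b) else 0) else 0) +
      (if i = b then (if j = a then l ^ 2 * β (reord2 hn d b a) else 0) else 0) := by
    intro i j
    by_cases hi : i = a <;> by_cases hi' : i = b <;> by_cases hj : j = a <;>
      by_cases hj' : j = b <;> simp_all [Pi.single_apply, eq_comm] <;> ring
  unfold gD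
  simp only [h0, h1, h2, Finset.sum_add_distrib]
  simp
  ring

lemma aux_off {n : ℕ} (hn : 2 ≤ n) (γ α β : (Fin n → ℝ) → ℝ) (d : Fin n → ℝ) (a b : Fin n)
    (hab : a ≠ b) (l : ℝ) :
    gD hn γ α β d (l • (Matrix.single a b 1 + Matrix.single b a 1))
      (l • (Matrix.single a b 1 + Matrix.single b a 1))
      = l ^ 2 * (α (reord2 hn d a b) + α (reord2 hn d b a)) := by
  have h0 : ∀ i : Fin n,
      (l • (Matrix.single a b 1 + Matrix.single b a 1) : Matrix (Fin n) (Fin n) ℝ) i i = 0 := by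
    intro i
    have : ¬ (a = i ∧ b = i) := by rintro ⟨rfl, h⟩; exact hab h.symm
    have : ¬ (b = i ∧ a = i) := by rintro ⟨rfl, h⟩; exact hab h
    simp [Matrix.single_apply, *]
  have h1 : ∀ i j : Fin n, (if i = j then (0:ℝ) else α (reord2 hn d i j) *
      (l • (Matrix.single a b 1 + Matrix.single b a 1) : Matrix (Fin n) (Fin n) ℝ) i j *
      (l • (Matrix.single a b 1 + Matrix.single b a 1) : Matrix (Fin n) (Fin n) ℝ) i j) =
      (if i = a then (if j = b then l ^ 2 * α (reord2 hn d a b) else 0) else 0) +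
      (if i = b then (if j = a then l ^ 2 * α (reord2 hn d b a) else 0) else 0) := by
    intro i j
    by_cases hi : i = a <;> by_cases hi' : i = b <;> by_cases hj : j = a <;>
      by_cases hj' : j = b <;> simp_all [Matrix.single_apply, eq_comm] <;> ring
  unfold gD
  simp only [h0, h1, Finset.sum_add_distrib]
  simp
  ring

/-- the `O(n)`-invariant metric `g` determined by `γ, α, β` is invariant under
scaling (`g_{λΣ}(λX,λX) = g_Σ(X,X)` for all `λ > 0`) iff `f(λx) = λ⁻² f(x)` for each
`f ∈ {α, β, γ}`, all positive `x` and all `λ > 0`. -/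
theorem o_n_invariant_metric_scaling_invariance (n : ℕ) (hn : 2 ≤ n)
    (γ α β : (Fin n → ℝ) → ℝ)
    (hγpos : ∀ d, PosVec d → 0 < γ d) (hαpos : ∀ d, PosVec d → 0 < α d)
    (hcompat : CompatCond hn γ α β) (hposS : PositivityCond hn γ β)
    (hγsym : Sym1n hn γ) (hαsym : Sym2n hn α) (hβsym : Sym2n hn β)
    (g : Matrix (Fin n) (Fin n) ℝ → Matrix (Fin n) (Fin n) ℝ → ℝ)
    (hg : ∀ (P : Matrix (Fin n) (Fin n) ℝ) (d : Fin n → ℝ), P * Pᵀ = 1 → PosVec d →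
      ∀ X : Matrix (Fin n) (Fin n) ℝ, X.IsSymm →
        g (P * Matrix.diagonal d * Pᵀ) X = gD hn γ α β d (Pᵀ * X * P) (Pᵀ * X * P)) :
    (∀ lam : ℝ, 0 < lam → ∀ Sig : Matrix (Fin n) (Fin n) ℝ, Sig.PosDef →
      ∀ X : Matrix (Fin n) (Fin n) ℝ, X.IsSymm → g (lam • Sig) (lam • X) = g Sig X) ↔
    (∀ x : Fin n → ℝ, PosVec x → ∀ lam : ℝ, 0 < lam →
      α (lam • x) = (lam ^ 2)⁻¹ * α x ∧
      β (lam • x) = (lam ^ 2)⁻¹ * β x ∧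
      γ (lam • x) = (lam ^ 2)⁻¹ * γ x) := by
  have key : ∀ (f : (Fin n → ℝ) → ℝ), Sym2n hn f → ∀ d, PosVec d →
      f (reord2 hn d ⟨0, by omega⟩ ⟨1, by omega⟩) = f d ∧
      f (reord2 hn d ⟨1, by omega⟩ ⟨0, by omega⟩) = f d := by
    intro f hf d hd
    have h01 : (⟨0, by omega⟩ : Fin n) ≠ ⟨1, by omega⟩ := by simp
    constructor
    · exact hf _ (Or.inl (by simp [perm2])) d hd
    · exact hf _ (Or.inr (by simp [perm2])) d hd
  have hr1 : ∀ d : Fin n → ℝ, reord1 hn d ⟨0, by omega⟩ = d := by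
    intro d; simp [reord1]
  constructor
  · intro H x hx l hl
    have h01 : (⟨0, by omega⟩ : Fin n) ≠ ⟨1, by omega⟩ := by simp
    have hl2 : l ^ 2 ≠ 0 := by positivity
    have K : ∀ (x : Fin n → ℝ), PosVec x → ∀ X : Matrix (Fin n) (Fin n) ℝ, X.IsSymm →
        gD hn γ α β (l • x) (l • X) (l • X) = gD hn γ α β x ((1:ℝ) • X) ((1:ℝ) • X) := by
      intro x hx X hX
      have h1 := hg 1 x (by simp) hx X hX
      have h2 := hg 1 (l • x) (by simp) (aux_posvec_smul hx hl) (l • X) (hX.smul l)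
      have h3 := H l hl (Matrix.diagonal x) (Matrix.PosDef.diagonal hx) X hX
      simp only [Matrix.one_mul, Matrix.mul_one, Matrix.transpose_one] at h1 h2
      rw [one_smul, ← h1, ← h2, ← h3, Matrix.diagonal_smul]
    have G : ∀ (x : Fin n → ℝ), PosVec x → l ^ 2 * γ (l • x) = γ x := by
      intro x hx
      have := K x hx (Matrix.diagonal (Pi.single ⟨0, by omega⟩ 1)) (Matrix.isSymm_diagonal _)
      rw [aux_diag1, aux_diag1, hr1, hr1] at this
      linarith
    have hlx := aux_posvec_smul hx hl
    have hA := K x hx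
      (Matrix.single (⟨0, by omega⟩ : Fin n) (⟨1, by omega⟩ : Fin n) (1:ℝ) +
        Matrix.single (⟨1, by omega⟩ : Fin n) (⟨0, by omega⟩ : Fin n) (1:ℝ)) (by
      rw [Matrix.IsSymm, Matrix.transpose_add, Matrix.transpose_single, Matrix.transpose_single,
        add_comm])
    rw [aux_off _ _ _ _ _ _ _ h01, aux_off _ _ _ _ _ _ _ h01, (key α hαsym _ hlx).1,
      (key α hαsym _ hlx).2, (key α hαsym _ hx).1, (key α hαsym _ hx).2] at hA
    have hB := K x hx (Matrix.diagonal
      (Pi.single (⟨0, by omega⟩ : Fin n) 1 + Pi.single (⟨1, by omega⟩ : Fin n) 1))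
      (Matrix.isSymm_diagonal _)
    rw [aux_diag2 _ _ _ _ _ _ _ h01, aux_diag2 _ _ _ _ _ _ _ h01, (key β hβsym _ hlx).1,
      (key β hβsym _ hlx).2, (key β hβsym _ hx).1, (key β hβsym _ hx).2, hr1, hr1,
      aux_smul1] at hB
    have hG0 := G x hx
    have hG1 := G (reord1 hn x ⟨1, by omega⟩) (fun i => hx _)
    refine ⟨?_, ?_, ?_⟩ <;> rw [eq_inv_mul_iff_mul_eq₀ hl2] <;> linarith
  · intro H l hl Sig hSig X hX
    obtain ⟨P, d, hP, hd, rfl⟩ := aux_spectral Sig hSig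
    have e : l • (P * Matrix.diagonal d * Pᵀ) = P * Matrix.diagonal (l • d) * Pᵀ := by
      rw [Matrix.diagonal_smul, Matrix.mul_smul, Matrix.smul_mul]
    have e2 : Pᵀ * (l • X) * P = l • (Pᵀ * X * P) := by
      rw [Matrix.mul_smul, Matrix.smul_mul]
    have hl' : l ≠ 0 := hl.ne'
    rw [e, hg P _ hP (aux_posvec_smul hd hl) _ (hX.smul l), hg P d hP hd X hX, e2]
    generalize Pᵀ * X * P = Y
    unfold gD
    congr 1
    · congr 1
      · refine Finset.sum_congr rfl fun i _ => ?_
        rw [aux_smul1, (H (reord1 hn d i) (fun k => hd _) l hl).2.2]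
        simp only [Matrix.smul_apply, smul_eq_mul]
        field_simp
      · refine Finset.sum_congr rfl fun i _ => Finset.sum_congr rfl fun j _ => ?_
        rw [aux_smul2, (H (reord2 hn d i j) (fun k => hd _) l hl).1]
        simp only [Matrix.smul_apply, smul_eq_mul]
        split_ifs
        · rfl
        · field_simp
    · refine Finset.sum_congr rfl fun i _ => Finset.sum_congr rfl fun j _ => ?_
      rw [aux_smul2, (H (reord2 hn d i j) (fun k => hd _) l hl).2.1]
      simp only [Matrix.smul_apply, smul_eq_mul]
      split_ifs
      · rfl
      · field_simp
end
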